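/- Let T be a reduced well-indumatched tree with at least 5 vertices. Then the set of all good pendant edges of T forms a maximal induced matching of T. -/

import Mathlib

open SimpleGraph

/-- `M` is an induced matching of `G`: a set of edges of `G` such that no two distinct
edges of `M` share an endpoint or have endpoints joined by an edge of `G`. -/
def IsInducedMatching {V : Type*} (G : SimpleGraph V) (M : Set (Sym2 V)) : Prop :=
  M ⊆ G.edgeSet ∧
    ∀ e ∈ M, ∀ f ∈ M, e ≠ f → ∀ u ∈ e, ∀ v ∈ f, u ≠ v ∧ ¬ G.Adj u v

/-- `M` is a maximal induced matching of `G`. -/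
def IsMaximalInducedMatching {V : Type*} (G : SimpleGraph V) (M : Set (Sym2 V)) : Prop :=
  IsInducedMatching G M ∧
    ∀ N : Set (Sym2 V), IsInducedMatching G N → M ⊆ N → N = M

/-- `G` is well-indumatched: all of its maximal induced matchings have the same size. -/
def WellIndumatched {V : Type*} (G : SimpleGraph V) : Prop :=
  ∀ M N : Set (Sym2 V), IsMaximalInducedMatching G M → IsMaximalInducedMatching G N →
    M.ncard = N.ncard

/-- A graph is reduced if no two distinct vertices have the same open neighborhood. -/
def Reduced {V : Type*} (G : SimpleGraph V) : Prop :=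
  ∀ x y : V, G.neighborSet x = G.neighborSet y → x = y

/-- The set of good pendant edges of `G`: edges joining a vertex of degree `1` to a
vertex of degree `2`. -/
def goodPendantEdges {V : Type*} [Fintype V] (G : SimpleGraph V) [DecidableRel G.Adj] :
    Set (Sym2 V) :=
  {e | e ∈ G.edgeSet ∧ ∃ x y : V, e = s(x, y) ∧ G.degree x = 1 ∧ G.degree y = 2}

/-!
Call an edge `k` *strong* if every maximal induced matching contains an edge meeting `k`. The edges
meeting a given edge are pairwise too close to lie in a common induced matching, so a set `K` of
edges which every edge meets is at least as large as any induced matching. In a forest equality is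
attained: take an edge `xy` with `x` as deep as possible and let `z` be the parent of its upper end
`y`; every edge missing `yz` is then separated from `xy`, so `xy` joins the induced matching, `yz`
joins `K`, and one recurses on the edges missing `yz`. In a well-indumatched forest all maximal
induced matchings have `K.ncard` elements, hence each of them uses every member of `K`; that is, all
members of `K` are strong.

If paths `y p w` and `z q w'` continue a strong edge `yz` of a forest on both sides, then `pw` and
`qw'` form an induced matching which no edge meeting `yz` can extend, a contradiction. So on one
side, say that of `y`, all neighbors other than `z` are leaves, and by reducedness there is at most
one. There is one, for if `y` were a leaf, its neighbor `z` would have a further neighbor `q` that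
is not a leaf, and an edge `qw'` with `w' ≠ z` would block `yz` as before. Hence `y` carries a good
pendant edge. Thus every edge `e` meets a strong edge which also meets a good pendant edge `f`, and
an induced matching containing both `e` and `f` has `e = f`. Two distinct good pendant edges of a
reduced connected graph fail to be separated only in the path on four vertices.
-/

section

variable {V : Type*} {G : SimpleGraph V}

/-- Two edges meet if they have a common end; in particular an edge meets itself. -/
def EdgesMeet (e f : Sym2 V) : Prop := ∃ v ∈ e, v ∈ f

/-- Two edges are separated if they are disjoint and no edge of `G` joins them: the relation that
distinct edges of an induced matching satisfy. -/
def EdgesSeparated (G : SimpleGraph V) (e f : Sym2 V) : Prop :=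
  ∀ u ∈ e, ∀ v ∈ f, u ≠ v ∧ ¬ G.Adj u v

lemma edgesMeet_mk {x y : V} {f : Sym2 V} : EdgesMeet s(x, y) f ↔ x ∈ f ∨ y ∈ f := by
  simp [EdgesMeet]

lemma EdgesSeparated.symm {e f : Sym2 V} (h : EdgesSeparated G e f) : EdgesSeparated G f e :=
  fun u hu v hv => ⟨(h v hv u hu).1.symm, fun huv => (h v hv u hu).2 huv.symm⟩

instance : Std.Symm (EdgesSeparated G) := ⟨fun _ _ => EdgesSeparated.symm⟩

lemma isInducedMatching_iff_pairwise {M : Set (Sym2 V)} :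
    IsInducedMatching G M ↔ M ⊆ G.edgeSet ∧ M.Pairwise (EdgesSeparated G) := Iff.rfl

lemma isInducedMatching_empty : IsInducedMatching G ∅ := by
  simp [isInducedMatching_iff_pairwise]

namespace IsInducedMatching

variable {M : Set (Sym2 V)}

lemma insert (hM : IsInducedMatching G M) {e : Sym2 V} (he : e ∈ G.edgeSet)
    (hsep : ∀ f ∈ M, EdgesSeparated G e f) : IsInducedMatching G (insert e M) :=
  ⟨Set.insert_subset he hM.1,
    (isInducedMatching_iff_pairwise.1 hM).2.insert_of_symm fun f hf _ => hsep f hf⟩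

lemma eq_of_edgesMeet (hM : IsInducedMatching G M) {k e f : Sym2 V} (hk : k ∈ G.edgeSet)
    (he : e ∈ M) (hf : f ∈ M) (hke : EdgesMeet k e) (hkf : EdgesMeet k f) : e = f := by
  by_contra hne
  have hsep := hM.2 e he f hf hne
  obtain ⟨u, huk, hue⟩ := hke
  obtain ⟨v, hvk, hvf⟩ := hkf
  obtain ⟨huv, hnadj⟩ := hsep u hue v hvf
  obtain rfl : k = s(u, v) := (Sym2.mem_and_mem_iff huv).1 ⟨huk, hvk⟩
  exact hnadj hk

lemma exists_injOn_of_cover (hM : IsInducedMatching G M) {K : Set (Sym2 V)}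
    (hK : K ⊆ G.edgeSet) (hcover : ∀ e ∈ M, ∃ k ∈ K, EdgesMeet k e) :
    ∃ φ : Sym2 V → Sym2 V, Set.MapsTo φ M K ∧ Set.InjOn φ M ∧ ∀ e ∈ M, EdgesMeet (φ e) e := by
  choose! φ hφK hφ using hcover
  exact ⟨φ, hφK, fun e he f hf hef =>
    hM.eq_of_edgesMeet (hK (hφK e he)) he hf (hφ e he) (hef ▸ hφ f hf), hφ⟩

lemma exists_isMaximalInducedMatching [Finite V] (hM : IsInducedMatching G M) :
    ∃ N, M ⊆ N ∧ IsMaximalInducedMatching G N := by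
  obtain ⟨N, hMN, hN⟩ := Finite.exists_le_maximal (p := fun N => IsInducedMatching G N) hM
  exact ⟨N, hMN, hN.1, fun N' hN' hNN' => (hN.2 hN' hNN').antisymm hNN'⟩

end IsInducedMatching

lemma isInducedMatching_singleton {e : Sym2 V} (he : e ∈ G.edgeSet) : IsInducedMatching G {e} := by
  simpa using isInducedMatching_empty.insert he (by simp)

lemma isInducedMatching_pair {e f : Sym2 V} (he : e ∈ G.edgeSet) (hf : f ∈ G.edgeSet)
    (hef : EdgesSeparated G e f) : IsInducedMatching G {e, f} :=
  (isInducedMatching_singleton hf).insert he (by simpa using hef)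

/-- An edge `k` is strong if every maximal induced matching contains an edge meeting `k`. -/
def IsStrongEdge (G : SimpleGraph V) (k : Sym2 V) : Prop :=
  k ∈ G.edgeSet ∧ ∀ M, IsMaximalInducedMatching G M → ∃ e ∈ M, EdgesMeet k e

lemma IsStrongEdge.exists_edgesMeet_edgesSeparated [Finite V] {k : Sym2 V}
    (hk : IsStrongEdge G k) {S : Set (Sym2 V)} (hS : IsInducedMatching G S)
    (hkS : ∀ f ∈ S, ¬ EdgesMeet k f) :
    ∃ g ∈ G.edgeSet, EdgesMeet k g ∧ ∀ f ∈ S, EdgesSeparated G g f := by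
  obtain ⟨M, hSM, hM⟩ := hS.exists_isMaximalInducedMatching
  obtain ⟨g, hgM, hkg⟩ := hk.2 M hM
  refine ⟨g, hM.1.1 hgM, hkg, fun f hf => hM.1.2 g hgM f (hSM hf) ?_⟩
  rintro rfl
  exact hkS g hf hkg

lemma WellIndumatched.isStrongEdge_of_cover [Finite V] (hG : WellIndumatched G)
    {I K : Set (Sym2 V)} (hI : IsInducedMatching G I) (hK : K ⊆ G.edgeSet)
    (hcover : ∀ e ∈ G.edgeSet, ∃ k ∈ K, EdgesMeet k e) (hKI : K.ncard ≤ I.ncard)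
    {k : Sym2 V} (hk : k ∈ K) : IsStrongEdge G k := by
  have hI_max : IsMaximalInducedMatching G I := by
    refine ⟨hI, fun N hN hIN => ?_⟩
    obtain ⟨φ, hφK, hφ_inj, -⟩ := hN.exists_injOn_of_cover hK fun e he => hcover e (hN.1 he)
    have hNK : N.ncard ≤ K.ncard := Set.ncard_le_ncard_of_injOn φ hφK hφ_inj
    exact (Set.eq_of_subset_of_ncard_le hIN (hNK.trans hKI)).symm
  refine ⟨hK hk, fun M hM => ?_⟩
  obtain ⟨φ, hφK, hφ_inj, hφ⟩ := hM.1.exists_injOn_of_cover hK fun e he => hcover e (hM.1.1 he)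
  have hφ_image : φ '' M = K := by
    refine Set.eq_of_subset_of_ncard_le hφK.image_subset ?_
    rwa [hφ_inj.ncard_image, hG M I hM hI_max]
  obtain ⟨e, heM, rfl⟩ := hφ_image.symm ▸ hk
  exact ⟨e, heM, hφ e heM⟩

/-- `d` is the depth function of a rooted forest: adjacent vertices lie on consecutive levels, and
each vertex has at most one neighbor (its parent) on the level above. -/
structure IsDepthFunction (G : SimpleGraph V) (d : V → ℕ) : Prop where
  consecutive : ∀ {u v}, G.Adj u v → d u = d v + 1 ∨ d v = d u + 1
  parent_unique : ∀ {a b c}, G.Adj a b → G.Adj a c → d a = d b + 1 → d a = d c + 1 → b = c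

lemma eq_of_adj_of_dist_eq_add_one (hG : G.IsAcyclic) {r a b c : V} (hra : G.Reachable r a)
    (hab : G.Adj a b) (hac : G.Adj a c) (hb : G.dist r a = G.dist r b + 1)
    (hc : G.dist r a = G.dist r c + 1) : b = c := by
  have exists_path_through {v : V} (hav : G.Adj a v) (hv : G.dist r a = G.dist r v + 1) :
      ∃ p : G.Walk r a, p.IsPath ∧ p.penultimate = v := by
    obtain ⟨q, hq⟩ := (hra.trans hav.reachable).exists_walk_length_eq_dist
    exact ⟨q.concat hav.symm, Walk.isPath_of_length_eq_dist _ (by simp [hq, hv]), by simp⟩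
  obtain ⟨p, hp, rfl⟩ := exists_path_through hab hb
  obtain ⟨q, hq, rfl⟩ := exists_path_through hac hc
  exact congrArg (fun w : G.Path r a => w.1.penultimate)
    ((hG.subsingleton_path r a).elim ⟨p, hp⟩ ⟨q, hq⟩)

lemma exists_isDepthFunction (hG : G.IsAcyclic) : ∃ d, IsDepthFunction G d := by
  let root (v : V) : V := (G.connectedComponentMk v).out
  have root_reachable (v : V) : G.Reachable (root v) v :=
    ConnectedComponent.exact (Quot.out_eq (G.connectedComponentMk v))
  have root_eq {u v : V} (huv : G.Adj u v) : root u = root v :=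
    congrArg Quot.out (ConnectedComponent.sound huv.reachable)
  refine ⟨fun v => G.dist (root v) v, fun {u v} huv => ?_, fun {a b c} hab hac hb hc => ?_⟩
  · rw [← root_eq huv]
    exact hG.dist_eq_dist_add_one_of_adj_of_reachable _ huv (root_reachable u)
  · rw [← root_eq hab] at hb
    rw [← root_eq hac] at hc
    exact eq_of_adj_of_dist_eq_add_one hG (root_reachable a) hab hac hb hc

namespace IsDepthFunction

variable {d : V → ℕ}

lemma exists_eq_mk (hd : IsDepthFunction G d) {e : Sym2 V} (he : e ∈ G.edgeSet) :
    ∃ x y, e = s(x, y) ∧ G.Adj x y ∧ d x = d y + 1 := by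
  induction e with
  | h a b =>
    rcases hd.consecutive he with hab | hba
    · exact ⟨a, b, rfl, he, hab⟩
    · exact ⟨b, a, Sym2.eq_swap, Adj.symm he, hba⟩

lemma exists_adj_forall_parent_eq (hd : IsDepthFunction G d) {x y : V} (hxy : G.Adj y x) :
    ∃ z, G.Adj y z ∧ ∀ c, G.Adj y c → d y = d c + 1 → c = z := by
  by_cases hparent : ∃ z, G.Adj y z ∧ d y = d z + 1
  · obtain ⟨z, hyz, hz⟩ := hparent
    exact ⟨z, hyz, fun c hyc hc => hd.parent_unique hyc hyz hc hz⟩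
  · exact ⟨x, hxy, fun c hyc hc => absurd ⟨c, hyc, hc⟩ hparent⟩

lemma edgesSeparated_of_not_edgesMeet (hd : IsDepthFunction G d) {x y z : V} (hxy : G.Adj x y)
    (hx : d x = d y + 1) (hz : ∀ c, G.Adj y c → d y = d c + 1 → c = z) {f : Sym2 V}
    (hf : f ∈ G.edgeSet) (hf_depth : ∀ u ∈ f, d u ≤ d x) (hf_meet : ¬ EdgesMeet s(y, z) f) :
    EdgesSeparated G s(x, y) f := by
  obtain ⟨hyf, hzf⟩ := not_or.1 (mt edgesMeet_mk.2 hf_meet)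
  obtain ⟨a, b, rfl, hab, ha⟩ := hd.exists_eq_mk hf
  have hnot_adj_y : ∀ u ∈ s(a, b), ¬ G.Adj y u := by
    intro u hu hyu
    rcases hd.consecutive hyu with hparent | hchild
    · exact hzf (hz u hyu hparent ▸ hu)
    · rcases Sym2.mem_iff.1 hu with rfl | rfl
      · exact hyf (hd.parent_unique hab hyu.symm ha hchild ▸ Sym2.mem_mk_right u b)
      · have := hf_depth a (Sym2.mem_mk_left a u)
        omega
  have hnot_adj_x : ∀ u ∈ s(a, b), ¬ G.Adj x u := by
    intro u hu hxu
    rcases hd.consecutive hxu with hparent | hchild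
    · exact hyf (hd.parent_unique hxy hxu hx hparent ▸ hu)
    · have := hf_depth u hu
      omega
  refine Sym2.forall_mem_pair.2 ⟨fun u hu => ⟨?_, hnot_adj_x u hu⟩,
    fun u hu => ⟨fun hyu => hyf (hyu ▸ hu), hnot_adj_y u hu⟩⟩
  rintro rfl
  exact hnot_adj_y x hu hxy.symm

end IsDepthFunction

lemma exists_edgesSeparated_of_not_edgesMeet [Finite V] (hG : G.IsAcyclic) {R : Set (Sym2 V)}
    (hR : R ⊆ G.edgeSet) (hne : R.Nonempty) :
    ∃ e ∈ R, ∃ k ∈ G.edgeSet, EdgesMeet k e ∧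
      ∀ f ∈ R, ¬ EdgesMeet k f → EdgesSeparated G e f := by
  obtain ⟨d, hd⟩ := exists_isDepthFunction hG
  obtain ⟨e₀, he₀⟩ := hne
  obtain ⟨x, ⟨e, heR, hxe⟩, hx_max⟩ := Set.exists_max_image {v | ∃ e ∈ R, v ∈ e} d (Set.toFinite _)
    ⟨_, e₀, he₀, Sym2.out_fst_mem e₀⟩
  obtain ⟨y, rfl⟩ := hxe
  have hxy : G.Adj x y := hR heR
  have hx : d x = d y + 1 := by
    have := hx_max y ⟨_, heR, Sym2.mem_mk_right x y⟩
    have := hd.consecutive hxy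
    omega
  obtain ⟨z, hyz, hz⟩ := hd.exists_adj_forall_parent_eq hxy.symm
  refine ⟨s(x, y), heR, s(y, z), hyz, edgesMeet_mk.2 (Or.inl (Sym2.mem_mk_right x y)), ?_⟩
  exact fun f hf => hd.edgesSeparated_of_not_edgesMeet hxy hx hz (hR hf)
    fun u hu => hx_max u ⟨f, hf, hu⟩

lemma exists_isInducedMatching_cover_ncard_le [Finite V] (hG : G.IsAcyclic) {R : Set (Sym2 V)}
    (hR : R ⊆ G.edgeSet) :
    ∃ I ⊆ R, ∃ K ⊆ G.edgeSet, IsInducedMatching G I ∧ K.ncard ≤ I.ncard ∧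
      ∀ f ∈ R, ∃ k ∈ K, EdgesMeet k f := by
  induction R using WellFoundedLT.induction with
  | ind R ih =>
  rcases R.eq_empty_or_nonempty with rfl | hne
  · exact ⟨∅, subset_rfl, ∅, Set.empty_subset _, isInducedMatching_empty, le_rfl, by simp⟩
  obtain ⟨e, heR, k, hk, hke, hsep⟩ := exists_edgesSeparated_of_not_edgesMeet hG hR hne
  have hlt : {f ∈ R | ¬ EdgesMeet k f} < R :=
    (Set.sep_subset _ _).ssubset_of_mem_notMem heR fun he => he.2 hke
  obtain ⟨I, hIR, K, hK, hI, hKI, hcover⟩ := ih _ hlt ((Set.sep_subset _ _).trans hR)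
  have heI : e ∉ I := fun he => (hIR he).2 hke
  refine ⟨insert e I, Set.insert_subset heR (hIR.trans (Set.sep_subset _ _)), insert k K,
    Set.insert_subset hk hK,
    hI.insert (hR heR) fun f hf => hsep f (hIR hf).1 (hIR hf).2, ?_, fun f hf => ?_⟩
  · calc (insert k K).ncard ≤ K.ncard + 1 := Set.ncard_insert_le k K
      _ ≤ I.ncard + 1 := by gcongr
      _ = (insert e I).ncard := (Set.ncard_insert_of_notMem heI).symm
  · by_cases hkf : EdgesMeet k f
    · exact ⟨k, Set.mem_insert k K, hkf⟩
    · obtain ⟨k', hk', hk'f⟩ := hcover f ⟨hf, hkf⟩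
      exact ⟨k', Set.mem_insert_of_mem k hk', hk'f⟩

lemma WellIndumatched.exists_isStrongEdge_edgesMeet [Finite V] (hG : WellIndumatched G)
    (hacyc : G.IsAcyclic) {e : Sym2 V} (he : e ∈ G.edgeSet) :
    ∃ k, IsStrongEdge G k ∧ EdgesMeet k e := by
  obtain ⟨I, -, K, hK, hI, hKI, hcover⟩ :=
    exists_isInducedMatching_cover_ncard_le hacyc subset_rfl
  obtain ⟨k, hk, hke⟩ := hcover e he
  exact ⟨k, hG.isStrongEdge_of_cover hI hK hcover hKI hk, hke⟩

/-- A path `y p w` with `p ≠ z` leads two steps away from the edge `yz` at `y`. -/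
def HasDeepBranch (G : SimpleGraph V) (y z : V) : Prop :=
  ∃ p w, G.Adj y p ∧ p ≠ z ∧ G.Adj p w ∧ w ≠ y

lemma reachable_deleteEdges_of_mem {y z p w : V} (hyp : G.Adj y p) (hpz : p ≠ z)
    (hpw : G.Adj p w) (hwy : w ≠ y) :
    ∀ u ∈ s(p, w), (G.deleteEdges {s(y, z)}).Reachable y u ∧ u ≠ y := by
  have hyp' : (G.deleteEdges {s(y, z)}).Adj y p := by
    simp [deleteEdges_adj, hyp, hpz, hyp.ne']
  have hpw' : (G.deleteEdges {s(y, z)}).Adj p w := by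
    simp [deleteEdges_adj, hpw, hpz, hyp.ne']
  exact Sym2.forall_mem_pair.2
    ⟨⟨hyp'.reachable, hyp.ne'⟩, hyp'.reachable.trans hpw'.reachable, hwy⟩

lemma edgesSeparated_of_isBridge {y z : V} (hyz : G.IsBridge s(y, z)) {e f : Sym2 V}
    (he : ∀ u ∈ e, (G.deleteEdges {s(y, z)}).Reachable y u ∧ u ≠ y)
    (hf : ∀ v ∈ f, (G.deleteEdges {s(y, z)}).Reachable z v) : EdgesSeparated G e f := by
  intro u hu v hv
  obtain ⟨hyu, huy⟩ := he u hu
  have hnot_reachable : ¬ (G.deleteEdges {s(y, z)}).Reachable u v := fun huv =>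
    isBridge_iff.1 hyz ((hyu.trans huv).trans (hf v hv).symm)
  refine ⟨fun huv => hnot_reachable (huv ▸ .rfl), fun huv => hnot_reachable ?_⟩
  have huz : u ≠ z := fun huz => isBridge_iff.1 hyz (huz ▸ hyu)
  exact Adj.reachable (by simp [deleteEdges_adj, huv, huy, huz])

lemma IsStrongEdge.not_hasDeepBranch_or [Finite V] (hG : G.IsAcyclic) {y z : V}
    (hk : IsStrongEdge G s(y, z)) : ¬ HasDeepBranch G y z ∨ ¬ HasDeepBranch G z y := by
  by_contra! hdeep
  obtain ⟨⟨p, w, hyp, hpz, hpw, hwy⟩, q, w', hzq, hqy, hqw', hw'z⟩ := hdeep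
  have hbridge : G.IsBridge s(y, z) := isAcyclic_iff_forall_isBridge.1 hG hk.1
  have hpw_side := reachable_deleteEdges_of_mem hyp hpz hpw hwy
  have hqw'_side := reachable_deleteEdges_of_mem hzq hqy hqw' hw'z
  rw [Sym2.eq_swap (a := z)] at hqw'_side
  have hsep := edgesSeparated_of_isBridge hbridge hpw_side fun v hv => (hqw'_side v hv).1
  have hmeet : ∀ f ∈ ({s(p, w), s(q, w')} : Set (Sym2 V)), ¬ EdgesMeet s(y, z) f := by
    rintro f (rfl | rfl) hf <;> rcases edgesMeet_mk.1 hf with hy | hz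
    · exact (hpw_side y hy).2 rfl
    · exact isBridge_iff.1 hbridge (hpw_side z hz).1
    · exact isBridge_iff.1 hbridge (hqw'_side y hy).1.symm
    · exact (hqw'_side z hz).2 rfl
  obtain ⟨g, -, hkg, hg⟩ :=
    hk.exists_edgesMeet_edgesSeparated (isInducedMatching_pair hpw hqw' hsep) hmeet
  rcases edgesMeet_mk.1 hkg with hyg | hzg
  · exact (hg s(p, w) (by simp) y hyg p (Sym2.mem_mk_left p w)).2 hyp
  · exact (hg s(q, w') (by simp) z hzg q (Sym2.mem_mk_left q w')).2 hzq

lemma natCard_le_card_of_neighborSet_subset (hG : G.Preconnected) {s : Finset V} {a : V}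
    (ha : a ∈ s) (hs : ∀ u ∈ s, G.neighborSet u ⊆ s) : Nat.card V ≤ s.card := by
  have hmem (b : V) : b ∈ s := by
    by_contra hb
    obtain ⟨p⟩ := hG a b
    obtain ⟨e, -, hfst, hsnd⟩ := p.exists_boundary_dart s ha hb
    exact hsnd (hs _ hfst e.adj)
  have : Fintype V := ⟨s, hmem⟩
  exact (Nat.card_eq_fintype_card (α := V)).trans_le (Finset.card_le_card fun b _ => hmem b)

lemma IsStrongEdge.exists_adj_ne [Finite V] (hred : Reduced G) (hG : G.Preconnected)
    (hcard : 3 ≤ Nat.card V) {y z : V} (hk : IsStrongEdge G s(y, z)) :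
    ∃ p, G.Adj y p ∧ p ≠ z := by
  classical
  by_contra! hy
  have hyz : G.Adj y z := hk.1
  obtain ⟨q, hzq, hqy⟩ : ∃ q, G.Adj z q ∧ q ≠ y := by
    by_contra! hz
    have hclosed : ∀ u ∈ ({y, z} : Finset V), G.neighborSet u ⊆ ({y, z} : Finset V) := by
      simpa [Set.subset_def] using ⟨fun v hv => Or.inr (hy v hv), fun v hv => Or.inl (hz v hv)⟩
    have := natCard_le_card_of_neighborSet_subset hG (Finset.mem_insert_self y {z}) hclosed
    have := Finset.card_le_two (a := y) (b := z)
    omega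
  obtain ⟨w, hqw, hwz⟩ : ∃ w, G.Adj q w ∧ w ≠ z := by
    by_contra! hq
    refine hqy (hred q y (Set.ext fun v => ⟨fun hv => ?_, fun hv => ?_⟩))
    · exact hq v hv ▸ hyz
    · exact hy v hv ▸ hzq.symm
  have hmeet : ∀ f ∈ ({s(q, w)} : Set (Sym2 V)), ¬ EdgesMeet s(y, z) f := by
    have hyw : y ≠ w := fun hyw => hzq.ne (hy q (hyw ▸ hqw.symm)).symm
    simpa [edgesMeet_mk] using ⟨⟨hqy.symm, hyw⟩, hzq.ne, hwz.symm⟩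
  obtain ⟨g, hg, hkg, hsep⟩ :=
    hk.exists_edgesMeet_edgesSeparated (isInducedMatching_singleton hqw) hmeet
  have hzg : z ∈ g := by
    rcases edgesMeet_mk.1 hkg with ⟨v, rfl⟩ | hzg
    · exact hy v hg ▸ Sym2.mem_mk_right y v
    · exact hzg
  exact (hsep s(q, w) rfl z hzg q (Sym2.mem_mk_left q w)).2 hzq

section GoodPendantEdges

variable [Fintype V] [DecidableRel G.Adj]

lemma degree_eq_ncard_neighborSet (v : V) : G.degree v = (G.neighborSet v).ncard := by
  rw [Set.ncard_eq_toFinset_card', ← card_neighborFinset_eq_degree, neighborFinset]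

lemma mem_goodPendantEdges_iff {e : Sym2 V} :
    e ∈ goodPendantEdges G ↔ ∃ x y c, e = s(x, y) ∧ x ≠ c ∧
      G.neighborSet x = {y} ∧ G.neighborSet y = {x, c} := by
  simp only [goodPendantEdges, Set.mem_ofPred_eq, degree_eq_ncard_neighborSet, Set.ncard_eq_one,
    Set.ncard_eq_two]
  constructor
  · rintro ⟨hxy, x, y, rfl, ⟨y', hx⟩, a, b, hab, hy⟩
    obtain rfl : y = y' := hx.subset hxy
    rcases hy.subset (Adj.symm hxy : G.Adj y x) with rfl | rfl
    · exact ⟨x, y, b, rfl, hab, hx, hy⟩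
    · exact ⟨x, y, a, rfl, hab.symm, hx, hy.trans (Set.pair_comm a x)⟩
  · rintro ⟨x, y, c, rfl, hxc, hx, hy⟩
    exact ⟨hx.superset rfl, x, y, rfl, ⟨y, hx⟩, x, c, hxc, hy⟩

lemma mk_mem_goodPendantEdges_of_not_hasDeepBranch (hred : Reduced G) {y z p : V}
    (hyz : G.Adj y z) (hyp : G.Adj y p) (hpz : p ≠ z) (hdeep : ¬ HasDeepBranch G y z) :
    s(p, y) ∈ goodPendantEdges G := by
  have hleaf {v : V} (hyv : G.Adj y v) (hvz : v ≠ z) : G.neighborSet v = {y} := by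
    refine Set.eq_singleton_iff_unique_mem.2 ⟨hyv.symm, fun w hvw => ?_⟩
    by_contra hwy
    exact hdeep ⟨v, w, hyv, hvz, hvw, hwy⟩
  refine mem_goodPendantEdges_iff.2 ⟨p, y, z, rfl, hpz, hleaf hyp hpz, Set.ext fun v => ?_⟩
  constructor
  · intro hyv
    by_cases hvz : v = z
    · exact Or.inr hvz
    · exact Or.inl (hred v p ((hleaf hyv hvz).trans (hleaf hyp hpz).symm))
  · rintro (rfl | rfl)
    exacts [hyp, hyz]

lemma IsStrongEdge.exists_mem_goodPendantEdges_edgesMeet (hred : Reduced G) (hG : G.IsTree)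
    (hcard : 3 ≤ Nat.card V) {k : Sym2 V} (hk : IsStrongEdge G k) :
    ∃ f ∈ goodPendantEdges G, EdgesMeet k f := by
  induction k with
  | h y z =>
    have hk' : IsStrongEdge G s(z, y) := Sym2.eq_swap ▸ hk
    rcases hk.not_hasDeepBranch_or hG.isAcyclic with hy | hz
    · obtain ⟨p, hyp, hpz⟩ := hk.exists_adj_ne hred hG.connected.preconnected hcard
      exact ⟨s(p, y), mk_mem_goodPendantEdges_of_not_hasDeepBranch hred hk.1 hyp hpz hy,
        edgesMeet_mk.2 (Or.inl (Sym2.mem_mk_right p y))⟩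
    · obtain ⟨q, hzq, hqy⟩ := hk'.exists_adj_ne hred hG.connected.preconnected hcard
      exact ⟨s(q, z), mk_mem_goodPendantEdges_of_not_hasDeepBranch hred hk'.1 hzq hqy hz,
        edgesMeet_mk.2 (Or.inr (Sym2.mem_mk_right q z))⟩

end GoodPendantEdges

/-- The path `x y y' x'` is a connected component. -/
lemma natCard_le_four_of_neighborSet_eq (hG : G.Preconnected) {x y x' y' : V}
    (hx : G.neighborSet x = {y}) (hy : G.neighborSet y = {x, y'})
    (hx' : G.neighborSet x' = {y'}) (hy' : G.neighborSet y' = {x', y}) : Nat.card V ≤ 4 := by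
  classical
  have hclosed : ∀ u ∈ ({x, y, x', y'} : Finset V),
      G.neighborSet u ⊆ ({x, y, x', y'} : Finset V) := by
    simp only [Finset.forall_mem_insert, Finset.mem_singleton, forall_eq, hx, hy, hx', hy']
    simp [Set.insert_subset_iff]
  exact (natCard_le_card_of_neighborSet_subset hG (Finset.mem_insert_self x _) hclosed).trans
    Finset.card_le_four

lemma edgesSeparated_of_neighborSet_eq (hred : Reduced G) (hG : G.Preconnected)
    (hcard : 5 ≤ Nat.card V) {x y c x' y' c' : V} (hxc : x ≠ c) (hxc' : x' ≠ c')
    (hx : G.neighborSet x = {y}) (hy : G.neighborSet y = {x, c})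
    (hx' : G.neighborSet x' = {y'}) (hy' : G.neighborSet y' = {x', c'})
    (hne : s(x, y) ≠ s(x', y')) : EdgesSeparated G s(x, y) s(x', y') := by
  have hyy' : y ≠ y' := by
    rintro rfl
    exact hne (hred x x' (hx.trans hx'.symm) ▸ rfl)
  have hxx' : x ≠ x' := by
    rintro rfl
    exact hyy' (Set.singleton_injective (hx.symm.trans hx'))
  have hxy' : x ≠ y' := by
    rintro rfl
    have hsub : ({x', c'} : Set V) ⊆ {y} := (hy'.symm.trans hx).subset
    exact hxc' ((hsub (Or.inl rfl)).trans (hsub (Or.inr rfl)).symm)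
  have hyx' : y ≠ x' := by
    rintro rfl
    have hsub : ({x, c} : Set V) ⊆ {y'} := (hy.symm.trans hx').subset
    exact hxc ((hsub (Or.inl rfl)).trans (hsub (Or.inr rfl)).symm)
  have hnot_adj : ¬ G.Adj y y' := by
    intro hadj
    obtain rfl : y' = c := (hy.subset hadj).resolve_left hxy'.symm
    obtain rfl : y = c' := (hy'.subset hadj.symm).resolve_left hyx'
    have := natCard_le_four_of_neighborSet_eq hG hx hy hx' hy'
    omega
  refine Sym2.forall_mem_pair.2 ⟨Sym2.forall_mem_pair.2 ⟨⟨hxx', fun h => ?_⟩, hxy', fun h => ?_⟩,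
    Sym2.forall_mem_pair.2 ⟨⟨hyx', fun h => ?_⟩, hyy', hnot_adj⟩⟩
  · exact hyx' (hx.subset h).symm
  · exact hyy' (hx.subset h).symm
  · exact hyy' (hx'.subset h.symm)

lemma isInducedMatching_goodPendantEdges [Fintype V] [DecidableRel G.Adj] (hred : Reduced G)
    (hG : G.Preconnected) (hcard : 5 ≤ Nat.card V) : IsInducedMatching G (goodPendantEdges G) := by
  refine isInducedMatching_iff_pairwise.2 ⟨fun e he => he.1, fun e he f hf hne => ?_⟩
  obtain ⟨x, y, c, rfl, hxc, hx, hy⟩ := mem_goodPendantEdges_iff.1 he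
  obtain ⟨x', y', c', rfl, hxc', hx', hy'⟩ := mem_goodPendantEdges_iff.1 hf
  exact edgesSeparated_of_neighborSet_eq hred hG hcard hxc hxc' hx hy hx' hy' hne

end

/-- In a reduced well-indumatched tree on at least `5` vertices, the set of good pendant
edges forms a maximal induced matching. -/
theorem stmt_8 {V : Type*} [Fintype V] (G : SimpleGraph V) [DecidableRel G.Adj]
    (hred : Reduced G) (hWIM : WellIndumatched G) (htree : G.IsTree)
    (hcard : 5 ≤ Fintype.card V) :
    IsMaximalInducedMatching G (goodPendantEdges G) := by
  rw [← Nat.card_eq_fintype_card] at hcard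
  refine ⟨isInducedMatching_goodPendantEdges hred htree.connected.preconnected hcard,
    fun N hN hgood => (Set.Subset.antisymm hgood fun e he => ?_).symm⟩
  obtain ⟨k, hk, hke⟩ := hWIM.exists_isStrongEdge_edgesMeet htree.isAcyclic (hN.1 he)
  obtain ⟨f, hf, hkf⟩ := hk.exists_mem_goodPendantEdges_edgesMeet hred htree (by omega)
  exact hN.eq_of_edgesMeet hk.1 he (hgood hf) hke hkf ▸ hf
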